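/- For every integer N ≥ 2, set h = 2N−2 and ρ = (N−1, N−2, …, 1, 0). Then for every real q with 0 < q < 1: (∑ over k ∈ ℤ^N with k_1+…+k_N even of q^((1/2)·∑_{i=1}^N (k_i + (N−i)/h)²)) / ∏_{k=1}^∞ (1−q^k)^N equals q^((∑_{i=1}^N (N−i)²)/(2h²)) / ( ∏_{j=1}^{N−1} ∏_{k=1}^∞ (1 − q^(k − (2j−1)/(2N−2))) · ∏_{k=1}^∞ (1 − q^(k − 1/2)) ). -/

import Mathlib

open scoped BigOperators

/-!
The first coordinate of `ρ / h` is `1 / 2`, so the involution `k₁ ↦ -1 - k₁` preserves every term of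
the theta series over `ℤ ^ N` while flipping the parity of `∑ kᵢ`. The sum over the even sublattice
is therefore half of the full sum, which is a product of one-dimensional theta series with shifts
`j / h`, `0 ≤ j ≤ m = N - 1`. With `x = q ^ (1 / h)`, the Jacobi triple product writes these in
terms of the factors `1 + x ^ (2 * m * n + (m ± j))`. The exponents run through all residues modulo
`h = 2 * m` once and through those of `0` and `m` once more; only the exponent `0` is not positive,
so the product of all factors is `2 * ∏ (1 + x ^ n) * ∏ (1 + x ^ (m * n))`. The `2` cancels the
half, and Euler's identity `∏ (1 + x ^ n) * ∏ (1 - x ^ (2 * n - 1)) = 1`, for `x` and for `x ^ m`,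
gives the product side.
-/

section

open Filter Finset Topology

section PowerProducts

lemma tprod_eq_prod_range_tprod_mul_add {M : Type*} [CommMonoid M] [TopologicalSpace M]
    [T2Space M] [ContinuousMul M] {f : ℕ → M} (hf : Multipliable f) {m : ℕ} (hm : 0 < m)
    (hf' : ∀ j < m, Multipliable fun n => f (m * n + j)) :
    ∏' n, f n = ∏ j ∈ range m, ∏' n, f (m * n + j) := by
  have partial_eq (n : ℕ) :
      ∏ j ∈ range m, ∏ i ∈ range n, f (m * i + j) = ∏ i ∈ range (m * n), f i := by
    rw [Finset.prod_comm]
    induction n with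
    | zero => simp
    | succ n ih => rw [prod_range_succ, ih, Nat.mul_succ, prod_range_add]
  have lim_blocks : Tendsto (fun n => ∏ i ∈ range (m * n), f i) atTop (𝓝 (∏' n, f n)) :=
    hf.tendsto_prod_tprod_nat.comp (tendsto_id.const_mul_atTop' hm)
  refine tendsto_nhds_unique lim_blocks (Tendsto.congr partial_eq ?_)
  exact tendsto_finsetProd _ fun j hj => (hf' j (mem_range.1 hj)).tendsto_prod_tprod_nat

lemma prod_range_add_mul_sub {M : Type*} [CommMonoid M] (f : ℕ → M) (m : ℕ) :
    ∏ j ∈ range (m + 1), f (m + j) * f (m - j) = f m * ∏ j ∈ range (2 * m + 1), f j := by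
  have reflect : ∏ j ∈ range (m + 1), f (m - j) = ∏ j ∈ range (m + 1), f j := by
    simpa using prod_range_reflect f (m + 1)
  rw [prod_mul_distrib, reflect, prod_range_succ', prod_range_succ,
    show 2 * m + 1 = m + (m + 1) by ring, prod_range_add, prod_range_succ' (fun j => f (m + j))]
  simp only [add_zero]
  ac_rfl

variable {𝕜 : Type*} [NormedField 𝕜] {x : 𝕜} {h : ℕ}

lemma one_sub_pow_ne_zero (hx : ‖x‖ < 1) {n : ℕ} (hn : n ≠ 0) : 1 - x ^ n ≠ 0 := fun h0 => by
  have : ‖x‖ ^ n < 1 := pow_lt_one₀ (norm_nonneg x) hx hn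
  rw [← norm_pow, ← sub_eq_zero.1 h0, norm_one] at this
  exact this.false

lemma summable_norm_mul_pow (hx : ‖x‖ < 1) (hh : 0 < h) (s : ℕ) (z : 𝕜) :
    Summable fun n : ℕ => ‖z * x ^ (h * n + s)‖ := by
  have inj : Function.Injective fun n : ℕ => h * n + s := fun a b hab => by
    simpa [hh.ne'] using hab
  simpa only [norm_mul, Function.comp_def] using
    ((summable_norm_geometric_of_norm_lt_one hx).comp_injective inj).mul_left ‖z‖

variable [CompleteSpace 𝕜]

lemma multipliable_one_add_mul_pow (hx : ‖x‖ < 1) (hh : 0 < h) (s : ℕ) (z : 𝕜) :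
    Multipliable fun n : ℕ => 1 + z * x ^ (h * n + s) :=
  multipliable_one_add_of_summable (summable_norm_mul_pow hx hh s z)

lemma multipliable_one_add_pow (hx : ‖x‖ < 1) (hh : 0 < h) (s : ℕ) :
    Multipliable fun n : ℕ => 1 + x ^ (h * n + s) := by
  simpa using multipliable_one_add_mul_pow hx hh s 1

lemma multipliable_one_sub_pow (hx : ‖x‖ < 1) (hh : 0 < h) (s : ℕ) :
    Multipliable fun n : ℕ => 1 - x ^ (h * n + s) := by
  simpa [sub_eq_add_neg] using multipliable_one_add_mul_pow hx hh s (-1)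

lemma tprod_one_sub_pow_ne_zero (hx : ‖x‖ < 1) (hh : 0 < h) {s : ℕ} (hs : s ≠ 0) :
    ∏' n : ℕ, (1 - x ^ (h * n + s)) ≠ 0 := by
  simpa [sub_eq_add_neg] using tprod_one_add_ne_zero_of_summable
    (fun n => by simpa [sub_eq_add_neg] using one_sub_pow_ne_zero hx (n := h * n + s) (by omega))
    (summable_norm_mul_pow hx hh s (-1))

lemma multipliable_one_add_pow_succ (hx : ‖x‖ < 1) :
    Multipliable fun n : ℕ => 1 + x ^ (n + 1) := by
  simpa only [one_mul] using multipliable_one_add_pow hx one_pos 1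

lemma multipliable_one_sub_pow_succ (hx : ‖x‖ < 1) :
    Multipliable fun n : ℕ => 1 - x ^ (n + 1) := by
  simpa only [one_mul] using multipliable_one_sub_pow hx one_pos 1

lemma tprod_one_sub_pow_succ_ne_zero (hx : ‖x‖ < 1) : ∏' n : ℕ, (1 - x ^ (n + 1)) ≠ 0 := by
  simpa only [one_mul] using tprod_one_sub_pow_ne_zero hx one_pos one_ne_zero

/-- Euler: partitions into distinct parts and into odd parts are equinumerous. -/
lemma tprod_one_add_pow_mul_tprod_one_sub_odd_pow (hx : ‖x‖ < 1) :
    (∏' n : ℕ, (1 + x ^ (n + 1))) * ∏' n : ℕ, (1 - x ^ (2 * n + 1)) = 1 := by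
  have split : (∏' n : ℕ, (1 - x ^ (2 * n + 1))) * ∏' n : ℕ, (1 - x ^ (2 * n + 2)) =
      ∏' n : ℕ, (1 - x ^ (n + 1)) :=
    tprod_even_mul_odd (f := fun n => 1 - x ^ (n + 1)) (multipliable_one_sub_pow hx two_pos 1)
      (multipliable_one_sub_pow hx two_pos 2)
  have diff_sq : (∏' n : ℕ, (1 + x ^ (n + 1))) * ∏' n : ℕ, (1 - x ^ (n + 1)) =
      ∏' n : ℕ, (1 - x ^ (2 * n + 2)) := by
    rw [← (multipliable_one_add_pow_succ hx).tprod_mul (multipliable_one_sub_pow_succ hx)]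
    exact tprod_congr fun n => by ring
  apply mul_right_cancel₀ (tprod_one_sub_pow_ne_zero hx two_pos two_ne_zero)
  rw [mul_assoc, split, diff_sq, one_mul]

lemma prod_range_tprod_one_add_pow (hx : ‖x‖ < 1) (hh : 0 < h) :
    ∏ j ∈ range h, ∏' n : ℕ, (1 + x ^ (h * n + (j + 1))) = ∏' n : ℕ, (1 + x ^ (n + 1)) :=
  (tprod_eq_prod_range_tprod_mul_add (multipliable_one_add_pow_succ hx) hh
    fun j _ => multipliable_one_add_pow hx hh (j + 1)).symm

lemma prod_range_tprod_one_sub_odd_pow (hx : ‖x‖ < 1) (hh : 0 < h) :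
    ∏ j ∈ range h, ∏' n : ℕ, (1 - x ^ (2 * h * n + (2 * j + 1))) =
      ∏' n : ℕ, (1 - x ^ (2 * n + 1)) := by
  have exponent (n j : ℕ) : 2 * (h * n + j) + 1 = 2 * h * n + (2 * j + 1) := by ring
  rw [tprod_eq_prod_range_tprod_mul_add (multipliable_one_sub_pow hx two_pos 1) hh] <;>
    simp only [exponent]
  exact fun j _ => multipliable_one_sub_pow hx (by positivity) (2 * j + 1)

lemma prod_range_tprod_one_add_pow_add_mul_sub (hx : ‖x‖ < 1) {m : ℕ} (hm : 0 < m) :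
    ∏ j ∈ range (m + 1), ((∏' n : ℕ, (1 + x ^ (2 * m * n + (m + j)))) *
        ∏' n : ℕ, (1 + x ^ (2 * m * n + (m - j)))) =
      2 * ((∏' n : ℕ, (1 + x ^ (n + 1))) * ∏' n : ℕ, (1 + (x ^ m) ^ (n + 1))) := by
  have hm2 : 0 < 2 * m := by positivity
  have hxm : ‖x ^ m‖ < 1 := by simpa using pow_lt_one₀ (norm_nonneg x) hx hm.ne'
  set P : ℕ → 𝕜 := fun s => ∏' n : ℕ, (1 + x ^ (2 * m * n + s)) with hP
  have P_zero : P 0 = 2 * P (2 * m) := by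
    have shift (n : ℕ) : 2 * m * (n + 1) + 0 = 2 * m * n + 2 * m := by ring
    simp only [hP]
    rw [tprod_eq_zero_mul' (by simpa only [shift] using multipliable_one_add_pow hx hm2 (2 * m))]
    simp only [shift, mul_zero, add_zero, pow_zero, one_add_one_eq_two]
  have P_mul : P m * P (2 * m) = ∏' n : ℕ, (1 + (x ^ m) ^ (n + 1)) := by
    have exponent (s n : ℕ) : m * (2 * n + s) = 2 * m * n + s * m := by ring
    rw [← prod_range_tprod_one_add_pow hxm two_pos, prod_range, Fin.prod_univ_two]
    simp only [hP, ← pow_mul, exponent, Fin.val_zero, Fin.val_one, zero_add, one_mul,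
      one_add_one_eq_two]
  rw [prod_range_add_mul_sub P, prod_range_succ', P_zero, prod_range_tprod_one_add_pow hx hm2,
    ← P_mul]
  ring

end PowerProducts

section GaussianBinomials

variable {K : Type*} [Field K] {q : K}

/-- The finite `q`-Pochhammer symbol `(q; q)_n = (1 - q) ⋯ (1 - q ^ n)`, the building block of
Gaussian binomials. -/
def qPochhammer (q : K) (n : ℕ) : K := ∏ i ∈ range n, (1 - q ^ (i + 1))

lemma qPochhammer_succ (q : K) (n : ℕ) :
    qPochhammer q (n + 1) = qPochhammer q n * (1 - q ^ (n + 1)) :=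
  prod_range_succ _ _

/-- The reciprocal `1 / (q; q)_j` of the `q`-Pochhammer symbol, extended by zero to negative `j`
so that the recursion `qPochhammerInv_sub_one` holds for all integers. -/
def qPochhammerInv (q : K) (j : ℤ) : K := if 0 ≤ j then (qPochhammer q j.toNat)⁻¹ else 0

lemma qPochhammerInv_natCast (q : K) (n : ℕ) : qPochhammerInv q n = (qPochhammer q n)⁻¹ := by
  simp [qPochhammerInv]

lemma qPochhammerInv_of_neg (q : K) {j : ℤ} (hj : j < 0) : qPochhammerInv q j = 0 :=
  if_neg hj.not_ge

lemma qPochhammerInv_sub_one (hq : ∀ n : ℕ, 1 - q ^ (n + 1) ≠ 0) (j : ℤ) :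
    qPochhammerInv q (j - 1) = qPochhammerInv q j * (1 - q ^ j) := by
  rcases lt_trichotomy j 0 with hj | rfl | hj
  · rw [qPochhammerInv_of_neg q hj, qPochhammerInv_of_neg q (by omega), zero_mul]
  · rw [qPochhammerInv_of_neg q (by omega), zpow_zero, sub_self, mul_zero]
  · obtain ⟨n, rfl⟩ : ∃ n : ℕ, j = (n + 1 : ℕ) := ⟨(j - 1).toNat, by omega⟩
    rw [qPochhammerInv_natCast, show ((n + 1 : ℕ) : ℤ) - 1 = n by omega, qPochhammerInv_natCast,
      qPochhammer_succ, zpow_natCast, mul_inv, inv_mul_cancel_right₀ (hq n)]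

/-- The Gaussian binomial coefficient `[2m choose m+k]_q`, for all integers `k` (zero for
`m < |k|`): the coefficients of the finite form of the Jacobi triple product. -/
def centralGaussBinom (q : K) (m : ℕ) (k : ℤ) : K :=
  qPochhammer q (2 * m) * (qPochhammerInv q (m + k) * qPochhammerInv q (m - k))

lemma centralGaussBinom_zero (q : K) (k : ℤ) :
    centralGaussBinom q 0 k = if k = 0 then 1 else 0 := by
  rcases lt_trichotomy k 0 with hk | rfl | hk
  · simp [centralGaussBinom, qPochhammerInv_of_neg q hk, hk.ne]
  · simp [centralGaussBinom, qPochhammerInv, qPochhammer]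
  · simp [centralGaussBinom, qPochhammerInv_of_neg q (neg_lt_zero.2 hk), hk.ne']

/-- The effect on the coefficients of multiplying the finite triple product by its next two
factors. -/
lemma centralGaussBinom_succ (hq0 : q ≠ 0) (hq : ∀ n : ℕ, 1 - q ^ (n + 1) ≠ 0) (m : ℕ) (k : ℤ) :
    centralGaussBinom q (m + 1) k = (1 + q ^ (2 * m + 1)) * centralGaussBinom q m k +
      q ^ (m + 1 - k) * centralGaussBinom q m (k - 1) +
      q ^ (m + 1 + k) * centralGaussBinom q m (k + 1) := by
  set X := q ^ ((m : ℤ) + 1 + k) with hX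
  set Y := q ^ ((m : ℤ) + 1 - k) with hY
  set A := qPochhammerInv q (m + 1 + k) with hA
  set B := qPochhammerInv q (m + 1 - k) with hB
  have X_div : q ^ ((m : ℤ) + k) = X / q := by
    rw [hX, div_eq_mul_inv, ← zpow_sub_one₀ hq0]; ring_nf
  have Y_div : q ^ ((m : ℤ) - k) = Y / q := by
    rw [hY, div_eq_mul_inv, ← zpow_sub_one₀ hq0]; ring_nf
  have A_one : qPochhammerInv q (m + k) = A * (1 - X) := by
    rw [← qPochhammerInv_sub_one hq]; ring_nf
  have B_one : qPochhammerInv q (m - k) = B * (1 - Y) := by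
    rw [← qPochhammerInv_sub_one hq]; ring_nf
  have A_two : qPochhammerInv q (m + (k - 1)) = A * (1 - X) * (1 - X / q) := by
    rw [← A_one, ← X_div, ← qPochhammerInv_sub_one hq]; ring_nf
  have B_two : qPochhammerInv q (m - (k + 1)) = B * (1 - Y) * (1 - Y / q) := by
    rw [← B_one, ← Y_div, ← qPochhammerInv_sub_one hq]; ring_nf
  have XY : q ^ (2 * m + 1) = X * Y / q := by
    rw [← zpow_add₀ hq0, div_eq_mul_inv, ← zpow_sub_one₀ hq0, ← zpow_natCast]; push_cast; ring_nf
  have pochhammer : qPochhammer q (2 * (m + 1)) =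
      qPochhammer q (2 * m) * (1 - X * Y / q) * (1 - X * Y) := by
    have XY' : q ^ (2 * m + 1 + 1) = X * Y := by rw [pow_succ, XY, div_mul_cancel₀ _ hq0]
    rw [show 2 * (m + 1) = 2 * m + 1 + 1 by ring, qPochhammer_succ, qPochhammer_succ, XY, XY']
  simp only [centralGaussBinom, Nat.cast_succ, pochhammer, XY, A_one, B_one, A_two, B_two,
    show (m : ℤ) - (k - 1) = m + 1 - k by ring, show (m : ℤ) + (k + 1) = m + 1 + k by ring,
    ← hA, ← hB]
  field_simp
  ring

lemma zpow_sq_mul_zpow_sub_one {p z : K} (hp0 : p ≠ 0) (hz : z ≠ 0) (m : ℕ) (k : ℤ) :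
    z * p ^ (2 * m + 1) * (p ^ ((k - 1) ^ 2) * z ^ (k - 1)) =
      (p ^ 2) ^ (m + 1 - k) * (p ^ (k ^ 2) * z ^ k) := by
  have p_weight : p ^ (2 * m + 1) * p ^ ((k - 1) ^ 2) = (p ^ 2) ^ (m + 1 - k) * p ^ (k ^ 2) := by
    simp only [← zpow_natCast, ← zpow_mul, ← zpow_add₀ hp0]; push_cast; ring_nf
  rw [zpow_sub_one₀ hz, ← mul_assoc _ (p ^ (k ^ 2)), ← p_weight]
  field_simp

/-- A finite form of the Jacobi triple product. -/
lemma hasSum_centralGaussBinom_mul_zpow [TopologicalSpace K] [IsTopologicalSemiring K] {p z : K}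
    (hp0 : p ≠ 0) (hp : ∀ n : ℕ, 1 - (p ^ 2) ^ (n + 1) ≠ 0) (hz : z ≠ 0) (m : ℕ) :
    HasSum (fun k : ℤ => centralGaussBinom (p ^ 2) m k * (p ^ (k ^ 2) * z ^ k))
      (∏ n ∈ range m, ((1 + z * p ^ (2 * n + 1)) * (1 + z⁻¹ * p ^ (2 * n + 1)))) := by
  induction m with
  | zero =>
    rw [prod_range_zero]
    refine (hasSum_ite_eq (0 : ℤ) (1 : K)).congr_fun fun k => ?_
    rw [centralGaussBinom_zero]
    split_ifs with hk <;> simp [hk]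
  | succ m ih =>
    have middle := ih.mul_left (1 + (p ^ 2) ^ (2 * m + 1))
    have left := ((Equiv.subRight (1 : ℤ)).hasSum_iff.2 ih).mul_left (z * p ^ (2 * m + 1))
    have right := ((Equiv.addRight (1 : ℤ)).hasSum_iff.2 ih).mul_left (z⁻¹ * p ^ (2 * m + 1))
    have weight_right (k : ℤ) : z⁻¹ * p ^ (2 * m + 1) * (p ^ ((k + 1) ^ 2) * z ^ (k + 1)) =
        (p ^ 2) ^ (m + 1 + k) * (p ^ (k ^ 2) * z ^ k) := by
      simpa [← neg_add', -neg_add_rev] using zpow_sq_mul_zpow_sub_one hp0 (inv_ne_zero hz) m (-k)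
    have factor : (1 + z * p ^ (2 * m + 1)) * (1 + z⁻¹ * p ^ (2 * m + 1)) =
        1 + (p ^ 2) ^ (2 * m + 1) + z * p ^ (2 * m + 1) + z⁻¹ * p ^ (2 * m + 1) := by
      field_simp
      ring
    rw [prod_range_succ, mul_comm, factor, add_mul, add_mul]
    refine ((middle.add left).add right).congr_fun fun k => ?_
    simp only [Function.comp_apply, Equiv.subRight_apply, Equiv.coe_addRight,
      centralGaussBinom_succ (pow_ne_zero 2 hp0) hp]
    linear_combination -centralGaussBinom (p ^ 2) m (k - 1) * zpow_sq_mul_zpow_sub_one hp0 hz m k -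
      centralGaussBinom (p ^ 2) m (k + 1) * weight_right k

end GaussianBinomials

section JacobiTripleProduct

variable {𝕜 : Type*} [NormedField 𝕜] {q p z : 𝕜}

lemma summable_norm_pow_sq_mul_pow (hp : ‖p‖ < 1) (z : 𝕜) :
    Summable fun n : ℕ => ‖p ^ (n ^ 2) * z ^ n‖ := by
  have ratio_zero : Tendsto (fun n : ℕ => ‖p ^ (2 * n + 1) * z‖) atTop (𝓝 0) := by
    simpa only [mul_comm z] using (summable_norm_mul_pow hp two_pos 1 z).tendsto_atTop_zero
  refine summable_of_ratio_norm_eventually_le (r := 1 / 2) (by norm_num) ?_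
  filter_upwards [ratio_zero.eventually_le_const one_half_pos] with n hn
  rw [norm_norm, norm_norm, show p ^ ((n + 1) ^ 2) * z ^ (n + 1) =
    p ^ (2 * n + 1) * z * (p ^ (n ^ 2) * z ^ n) by ring, norm_mul]
  gcongr

lemma summable_norm_zpow_sq_mul_zpow (hp : ‖p‖ < 1) (z : 𝕜) :
    Summable fun k : ℤ => ‖p ^ (k ^ 2) * z ^ k‖ := by
  refine .of_nat_of_neg ((summable_norm_pow_sq_mul_pow hp z).congr fun n => ?_)
    ((summable_norm_pow_sq_mul_pow hp z⁻¹).congr fun n => ?_)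
  · norm_cast
  · rw [neg_sq, zpow_neg, inv_pow]
    norm_cast

variable [CompleteSpace 𝕜]

lemma tendsto_qPochhammer (hq : ‖q‖ < 1) :
    Tendsto (qPochhammer q) atTop (𝓝 (∏' n : ℕ, (1 - q ^ (n + 1)))) :=
  (multipliable_one_sub_pow_succ hq).tendsto_prod_tprod_nat

lemma tendsto_qPochhammerInv (hq : ‖q‖ < 1) :
    Tendsto (qPochhammerInv q) atTop (𝓝 (∏' n : ℕ, (1 - q ^ (n + 1)))⁻¹) := by
  have toNat_atTop : Tendsto Int.toNat atTop atTop :=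
    tendsto_atTop.2 fun n => (eventually_ge_atTop (n : ℤ)).mono fun j hj => by omega
  refine (((tendsto_qPochhammer hq).inv₀ (tprod_one_sub_pow_succ_ne_zero hq)).comp
    toNat_atTop).congr' ?_
  filter_upwards [eventually_ge_atTop (0 : ℤ)] with j hj
  exact (if_pos hj).symm

lemma tendsto_centralGaussBinom (hq : ‖q‖ < 1) (k : ℤ) :
    Tendsto (fun m => centralGaussBinom q m k) atTop (𝓝 (∏' n : ℕ, (1 - q ^ (n + 1)))⁻¹) := by
  have add_atTop : Tendsto (fun m : ℕ => (m : ℤ) + k) atTop atTop :=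
    tendsto_atTop_add_const_right _ k tendsto_natCast_atTop_atTop
  have sub_atTop : Tendsto (fun m : ℕ => (m : ℤ) - k) atTop atTop :=
    tendsto_atTop_add_const_right _ (-k) tendsto_natCast_atTop_atTop
  have lim := ((tendsto_qPochhammer hq).comp (tendsto_id.const_mul_atTop' two_pos)).mul
    (((tendsto_qPochhammerInv hq).comp add_atTop).mul ((tendsto_qPochhammerInv hq).comp sub_atTop))
  rwa [mul_inv_cancel_left₀ (tprod_one_sub_pow_succ_ne_zero hq)] at lim

lemma exists_norm_centralGaussBinom_le (hq : ‖q‖ < 1) :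
    ∃ C, ∀ (m : ℕ) (k : ℤ), ‖centralGaussBinom q m k‖ ≤ C := by
  obtain ⟨A, hA⟩ := (Metric.isBounded_range_of_tendsto _
    (tendsto_qPochhammer hq)).exists_norm_le
  obtain ⟨B, hB⟩ := (Metric.isBounded_range_of_tendsto _ ((tendsto_qPochhammer hq).inv₀
    (tprod_one_sub_pow_succ_ne_zero hq))).exists_norm_le
  simp only [Set.forall_mem_range] at hA hB
  have hA0 : 0 ≤ A := (norm_nonneg _).trans (hA 0)
  have hB0 : 0 ≤ B := (norm_nonneg _).trans (hB 0)
  have inv_le (j : ℤ) : ‖qPochhammerInv q j‖ ≤ B := by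
    unfold qPochhammerInv
    split_ifs
    · exact hB _
    · rwa [norm_zero]
  refine ⟨A * (B * B), fun m k => ?_⟩
  rw [centralGaussBinom, norm_mul, norm_mul]
  gcongr
  exacts [hA _, inv_le _, inv_le _]

theorem jacobi_triple_product (hp0 : p ≠ 0) (hp : ‖p‖ < 1) (hz : z ≠ 0) :
    ∑' k : ℤ, p ^ (k ^ 2) * z ^ k = (∏' n : ℕ, (1 - (p ^ 2) ^ (n + 1))) *
      ((∏' n : ℕ, (1 + z * p ^ (2 * n + 1))) * ∏' n : ℕ, (1 + z⁻¹ * p ^ (2 * n + 1))) := by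
  have hq : ‖p ^ 2‖ < 1 := by simpa using pow_lt_one₀ (norm_nonneg p) hp two_ne_zero
  obtain ⟨C, hC⟩ := exists_norm_centralGaussBinom_le hq
  have lim_sum := tendsto_tsum_of_dominated_convergence
    (f := fun m k => centralGaussBinom (p ^ 2) m k * (p ^ (k ^ 2) * z ^ k))
    ((summable_norm_zpow_sq_mul_zpow hp z).mul_left C)
    (fun k => (tendsto_centralGaussBinom hq k).mul_const _)
    (.of_forall fun m k => by rw [norm_mul]; gcongr; exact hC m k)
  have finite_form (m : ℕ) : ∑' k, centralGaussBinom (p ^ 2) m k * (p ^ (k ^ 2) * z ^ k) =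
      (∏ n ∈ range m, (1 + z * p ^ (2 * n + 1))) * ∏ n ∈ range m, (1 + z⁻¹ * p ^ (2 * n + 1)) := by
    rw [(hasSum_centralGaussBinom_mul_zpow hp0
      (fun n => one_sub_pow_ne_zero hq n.succ_ne_zero) hz m).tsum_eq, prod_mul_distrib]
  simp only [finite_form, tsum_mul_left] at lim_sum
  have lim_prod (w : 𝕜) : Tendsto (fun m => ∏ n ∈ range m, (1 + w * p ^ (2 * n + 1))) atTop
      (𝓝 (∏' n : ℕ, (1 + w * p ^ (2 * n + 1)))) :=
    (multipliable_one_add_mul_pow hp two_pos 1 w).tendsto_prod_tprod_nat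
  rw [← tendsto_nhds_unique lim_sum ((lim_prod z).mul (lim_prod z⁻¹)),
    mul_inv_cancel_left₀ (tprod_one_sub_pow_succ_ne_zero hq)]

end JacobiTripleProduct

section ParityInvolution

lemma two_nsmul_tsum_subtype_of_involutive {X G : Type*} [AddCommGroup G] [UniformSpace G]
    [IsUniformAddGroup G] [CompleteSpace G] [T2Space G] {F : X → G} (hF : Summable F) {σ : X → X}
    (hσ : σ.Involutive) (hFσ : ∀ x, F (σ x) = F x) {s : Set X} (hs : ∀ x, σ x ∈ s ↔ x ∉ s) :
    2 • ∑' x : s, F x = ∑' x, F x := by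
  have swap : ∑' x : ↥sᶜ, F x = ∑' x : s, F x := by
    rw [← (hσ.toPerm.subtypeEquiv fun x => (hs x).symm).tsum_eq fun x : s => F x]
    exact tsum_congr fun x => (hFσ x).symm
  rw [two_nsmul, ← hF.tsum_subtype_add_tsum_subtype_compl s, swap]

variable {R : Type*} [NormedCommRing R] {n : ℕ} {α : Fin n → Type*} {f : ∀ i, α i → R}

lemma summable_norm_prod_pi (hf : ∀ i, Summable fun a => ‖f i a‖) :
    Summable fun k : ∀ i, α i => ‖∏ i, f i (k i)‖ := by
  induction n with
  | zero => exact .of_finite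
  | succ n ih =>
    rw [← (Fin.consEquiv α).summable_iff]
    simpa only [Function.comp_def, Fin.consEquiv_apply, Fin.prod_univ_succ, Fin.cons_zero,
      Fin.cons_succ] using (hf 0).mul_norm (ih fun i => hf i.succ)

lemma tsum_prod_pi [CompleteSpace R] (hf : ∀ i, Summable fun a => ‖f i a‖) :
    ∑' k : ∀ i, α i, ∏ i, f i (k i) = ∏ i, ∑' a, f i a := by
  induction n with
  | zero => simp
  | succ n ih =>
    rw [Fin.prod_univ_succ, ← ih fun i => hf i.succ, tsum_mul_tsum_of_summable_norm (hf 0)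
      (summable_norm_prod_pi fun i => hf i.succ), ← (Fin.consEquiv α).tsum_eq]
    simp only [Fin.consEquiv_apply, Fin.prod_univ_succ, Fin.cons_zero, Fin.cons_succ]

lemma two_mul_tsum_even_prod [CompleteSpace R] {f : Fin n → ℤ → R}
    (hf : ∀ i, Summable fun k => ‖f i k‖) {i₀ : Fin n} (hi₀ : ∀ k, f i₀ (-1 - k) = f i₀ k) :
    2 * ∑' k : {k : Fin n → ℤ // Even (∑ i, k i)}, ∏ i, f i (k.1 i) = ∏ i, ∑' k, f i k := by
  rw [← tsum_prod_pi hf, two_mul, ← two_nsmul]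
  refine two_nsmul_tsum_subtype_of_involutive (summable_norm_prod_pi hf).of_norm
    (σ := fun k => Function.update k i₀ (-1 - k i₀)) (fun k => by simp) (fun k => ?_)
    (s := {k | Even (∑ i, k i)}) fun k => ?_
  · refine prod_congr rfl fun i _ => ?_
    obtain rfl | hi := eq_or_ne i i₀
    · rw [Function.update_self, hi₀]
    · rw [Function.update_of_ne hi]
  · rw [Set.mem_ofPred_eq, Set.mem_ofPred_eq, sum_update_of_mem (mem_univ i₀),
      sum_eq_add_sum_sdiff_singleton_of_mem (mem_univ i₀) k]
    grind

end ParityInvolution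

section RealPowers

variable {𝕜 : Type*} [NormedField 𝕜]

lemma addChar_sum_eq_prod {A K ι : Type*} [AddCommMonoid A] [CommMonoid K] (e : AddChar A K)
    (s : Finset ι) (c : ι → A) : e (∑ i ∈ s, c i) = ∏ i ∈ s, e (c i) :=
  map_prod e.toMonoidHom (fun i => Multiplicative.ofAdd (c i)) s

lemma addChar_eq_pow {M : Type*} [Monoid M] (e : AddChar ℝ M) {c d : ℝ} {n : ℕ}
    (hc : c = n * d) : e c = e d ^ n := by
  rw [hc, ← nsmul_eq_mul, AddChar.map_nsmul_eq_pow]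

lemma norm_addChar_lt_one {e : AddChar ℝ 𝕜} (he : ‖e 1‖ < 1) {n : ℕ} (hn : n ≠ 0) :
    ‖e (1 / n)‖ < 1 := by
  have pow_eq : e 1 = e (1 / n) ^ n := addChar_eq_pow e (by field_simp)
  rwa [pow_eq, norm_pow, pow_lt_one_iff_of_nonneg (norm_nonneg _) hn] at he

lemma addChar_half_mul_sq (e : AddChar ℝ 𝕜) (a : ℝ) (k : ℤ) :
    e (1 / 2 * (k + a) ^ 2) = e (a ^ 2 / 2) * (e (1 / 2) ^ (k ^ 2) * e a ^ k) := by
  simp only [← AddChar.map_zsmul_eq_zpow, ← AddChar.map_add_eq_mul, zsmul_eq_mul]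
  congr 1
  push_cast
  ring

lemma summable_norm_addChar_half_mul_sq {e : AddChar ℝ 𝕜} (he : ‖e 1‖ < 1) (a : ℝ) :
    Summable fun k : ℤ => ‖e (1 / 2 * (k + a) ^ 2)‖ := by
  have he2 : ‖e (1 / 2)‖ < 1 := mod_cast norm_addChar_lt_one he two_ne_zero
  simp only [addChar_half_mul_sq, norm_mul (e (a ^ 2 / 2))]
  exact (summable_norm_zpow_sq_mul_zpow he2 (e a)).mul_left _

lemma tprod_one_sub_addChar_add_half (e : AddChar ℝ 𝕜) {m : ℕ} (hm : 0 < m) :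
    ∏' k : ℕ, (1 - e ((k : ℝ) + 1 / 2)) =
      ∏' n : ℕ, (1 - (e (1 / (2 * m)) ^ m) ^ (2 * n + 1)) := by
  refine tprod_congr fun k => ?_
  rw [← pow_mul, addChar_eq_pow e]
  push_cast
  field_simp

variable [CompleteSpace 𝕜]

lemma tsum_addChar_half_mul_sq {e : AddChar ℝ 𝕜} (he : ‖e 1‖ < 1) (a : ℝ) :
    ∑' k : ℤ, e (1 / 2 * (k + a) ^ 2) = e (a ^ 2 / 2) * ((∏' n : ℕ, (1 - e 1 ^ (n + 1))) *
      ((∏' n : ℕ, (1 + e (n + 1 / 2 + a))) * ∏' n : ℕ, (1 + e (n + 1 / 2 - a)))) := by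
  have he2 : ‖e (1 / 2)‖ < 1 := mod_cast norm_addChar_lt_one he two_ne_zero
  have sq_half : e (1 / 2) ^ 2 = e 1 := (addChar_eq_pow e (by norm_num)).symm
  have odd_pow (n : ℕ) : e (1 / 2) ^ (2 * n + 1) = e (n + 1 / 2) :=
    (addChar_eq_pow e (by push_cast; ring)).symm
  simp only [addChar_half_mul_sq, tsum_mul_left, jacobi_triple_product (e.val_isUnit _).ne_zero he2
    (e.val_isUnit a).ne_zero, sq_half, odd_pow, ← AddChar.map_neg_eq_inv,
    ← AddChar.map_add_eq_mul, add_comm a, neg_add_eq_sub]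

/-- The shift `1 / 2` makes the summand invariant under `k ↦ -1 - k`, which flips parity. -/
lemma two_mul_tsum_even_addChar {e : AddChar ℝ 𝕜} (he : ‖e 1‖ < 1) {n : ℕ} {a : Fin n → ℝ}
    {i₀ : Fin n} (hi₀ : a i₀ = 1 / 2) :
    2 * ∑' k : {k : Fin n → ℤ // Even (∑ i, k i)}, e (1 / 2 * ∑ i, (k.1 i + a i) ^ 2) =
      ∏ i, ∑' k : ℤ, e (1 / 2 * (k + a i) ^ 2) := by
  rw [← two_mul_tsum_even_prod (fun i => summable_norm_addChar_half_mul_sq he (a i)) (i₀ := i₀)]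
  · simp only [mul_sum, addChar_sum_eq_prod]
  · intro k
    rw [hi₀]
    push_cast
    ring_nf

lemma tsum_addChar_half_mul_sq_div {e : AddChar ℝ 𝕜} (he : ‖e 1‖ < 1) {m j : ℕ} (hm : 0 < m)
    (hj : j ≤ m) :
    ∑' k : ℤ, e (1 / 2 * (k + (j : ℝ) / (2 * m)) ^ 2) =
      e (((j : ℝ) / (2 * m)) ^ 2 / 2) * ((∏' n : ℕ, (1 - e 1 ^ (n + 1))) *
        ((∏' n : ℕ, (1 + e (1 / (2 * m)) ^ (2 * m * n + (m + j)))) *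
          ∏' n : ℕ, (1 + e (1 / (2 * m)) ^ (2 * m * n + (m - j))))) := by
  have plus (n : ℕ) : e (n + 1 / 2 + j / (2 * m)) = e (1 / (2 * m)) ^ (2 * m * n + (m + j)) :=
    addChar_eq_pow e (by push_cast; field_simp; ring)
  have minus (n : ℕ) : e (n + 1 / 2 - j / (2 * m)) = e (1 / (2 * m)) ^ (2 * m * n + (m - j)) :=
    addChar_eq_pow e (by push_cast [hj]; field_simp; ring)
  simp only [tsum_addChar_half_mul_sq he, plus, minus]

lemma prod_tsum_addChar_half_mul_sq_div {e : AddChar ℝ 𝕜} (he : ‖e 1‖ < 1) {m : ℕ} (hm : 0 < m) :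
    ∏ i : Fin (m + 1), ∑' k : ℤ, e (1 / 2 * (k + ((m : ℝ) - i) / (2 * m)) ^ 2) =
      e ((∑ i : Fin (m + 1), ((m : ℝ) - i) ^ 2) / (2 * (2 * m) ^ 2)) *
        ((∏' n : ℕ, (1 - e 1 ^ (n + 1))) ^ (m + 1) *
          (2 * ((∏' n : ℕ, (1 + e (1 / (2 * m)) ^ (n + 1))) *
            ∏' n : ℕ, (1 + (e (1 / (2 * m)) ^ m) ^ (n + 1))))) := by
  have hx : ‖e (1 / (2 * m))‖ < 1 := mod_cast norm_addChar_lt_one he (n := 2 * m) (by omega)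
  have reflect (F : ℝ → 𝕜) : ∏ i : Fin (m + 1), F ((m : ℝ) - i) = ∏ j ∈ range (m + 1), F j := by
    rw [← prod_range fun i => F (m - i), ← prod_range_reflect]
    refine prod_congr rfl fun j hj => ?_
    have : j ≤ m := by simpa [Nat.lt_succ_iff] using hj
    push_cast [this]
    ring_nf
  have scaled_sq (i : Fin (m + 1)) : ((m : ℝ) - i) ^ 2 / (2 * (2 * m) ^ 2) =
      (((m : ℝ) - i) / (2 * m)) ^ 2 / 2 := by ring
  rw [sum_div, addChar_sum_eq_prod, reflect fun b => ∑' k : ℤ, e (1 / 2 * (k + b / (2 * m)) ^ 2)]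
  simp only [scaled_sq]
  rw [reflect fun b => e ((b / (2 * m)) ^ 2 / 2), ← prod_range_tprod_one_add_pow_add_mul_sub hx hm,
    ← card_range (m + 1), ← prod_const, card_range, ← prod_mul_distrib, ← prod_mul_distrib]
  exact prod_congr rfl fun j hj =>
    tsum_addChar_half_mul_sq_div he hm (by simpa [Nat.lt_succ_iff] using hj)

lemma prod_tprod_one_sub_addChar {e : AddChar ℝ 𝕜} (he : ‖e 1‖ < 1) {m : ℕ} (hm : 0 < m) :
    ∏ j ∈ range m, ∏' k : ℕ, (1 - e (((k : ℝ) + 1) - (2 * ((j : ℝ) + 1) - 1) / (2 * m))) =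
      ∏' n : ℕ, (1 - e (1 / (2 * m)) ^ (2 * n + 1)) := by
  have hx : ‖e (1 / (2 * m))‖ < 1 := mod_cast norm_addChar_lt_one he (n := 2 * m) (by omega)
  rw [← prod_range_tprod_one_sub_odd_pow hx hm, ← prod_range_reflect]
  refine prod_congr rfl fun j hj => tprod_congr fun k => congrArg _ (addChar_eq_pow e ?_)
  have : j + 1 ≤ m := mem_range.1 hj
  rw [Nat.sub_sub, add_comm 1 j]
  push_cast [this]
  field_simp
  ring

end RealPowers

end

theorem stmt9_general {𝕜 : Type*} [NormedField 𝕜] [CompleteSpace 𝕜] [NeZero (2 : 𝕜)] (N : ℕ)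
    (hN : 2 ≤ N) (e : AddChar ℝ 𝕜) (he : ‖e 1‖ < 1) :
    (∑' k : {k : Fin N → ℤ // Even (∑ i, k i)},
        e ((1 / 2 : ℝ) * ∑ i : Fin N,
          ((k.1 i : ℝ) + ((N : ℝ) - 1 - (i.val : ℝ)) / (2 * (N : ℝ) - 2)) ^ 2)) /
      ∏' k : ℕ, (1 - e 1 ^ (k + 1)) ^ N =
      e ((∑ i : Fin N, ((N : ℝ) - 1 - (i.val : ℝ)) ^ 2) / (2 * (2 * (N : ℝ) - 2) ^ 2)) /
        ((∏ j ∈ Finset.range (N - 1),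
            ∏' k : ℕ, (1 - e (((k : ℝ) + 1) - (2 * ((j : ℝ) + 1) - 1) / (2 * (N : ℝ) - 2)))) *
          ∏' k : ℕ, (1 - e ((k : ℝ) + 1 / 2))) := by
  obtain ⟨m, rfl⟩ : ∃ m, N = m + 1 := ⟨N - 1, by omega⟩
  have hm : 0 < m := by omega
  have hx : ‖e (1 / (2 * m))‖ < 1 := mod_cast norm_addChar_lt_one he (n := 2 * m) (by omega)
  have hxm : ‖e (1 / (2 * m)) ^ m‖ < 1 := by
    simpa using pow_lt_one₀ (norm_nonneg _) hx hm.ne'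
  have rho (i : ℕ) : ((m + 1 : ℕ) : ℝ) - 1 - i = m - i := by push_cast; ring
  have coxeter : 2 * ((m + 1 : ℕ) : ℝ) - 2 = 2 * m := by push_cast; ring
  have parity := (two_mul_tsum_even_addChar he (a := fun i : Fin (m + 1) => ((m : ℝ) - i) / (2 * m))
    (i₀ := 0) (by simp only [Fin.val_zero, Nat.cast_zero, sub_zero]; field_simp)).trans
    (prod_tsum_addChar_half_mul_sq_div he hm)
  have euler := congr_arg₂ (· * ·) (tprod_one_add_pow_mul_tprod_one_sub_odd_pow hx)
    (tprod_one_add_pow_mul_tprod_one_sub_odd_pow hxm)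
  simp only [mul_mul_mul_comm, mul_one] at euler
  simp only [rho, coxeter, Nat.add_sub_cancel]
  rw [(multipliable_one_sub_pow_succ he).tprod_pow, prod_tprod_one_sub_addChar he hm,
    tprod_one_sub_addChar_add_half e hm, div_eq_mul_inv (e _), ← eq_inv_of_mul_eq_one_left euler,
    div_eq_iff (pow_ne_zero _ (tprod_one_sub_pow_succ_ne_zero he))]
  apply mul_left_cancel₀ (two_ne_zero (α := 𝕜))
  rw [parity]
  ring

/-- The real powers `c ↦ q ^ c` of a positive base, as an additive character of `ℝ`, to which
`stmt9_general` is specialized. -/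
noncomputable def rpowAddChar {q : ℝ} (hq : 0 < q) : AddChar ℝ ℝ where
  toFun c := q ^ c
  map_zero_eq_one' := Real.rpow_zero q
  map_add_eq_mul' := Real.rpow_add hq

lemma rpowAddChar_apply {q : ℝ} (hq : 0 < q) (c : ℝ) : rpowAddChar hq c = q ^ c := rfl

/-- Macdonald identity for `D_N` from the principal specialization of the
    Weyl–Kac character formula: with `h = 2N−2` and `ρ = (N−1,…,1,0)`,
    `Θ_{D_N}(ρ/h;q) / ∏(1−q^k)^N = q^{(ρ,ρ)/(2h²)} /
      (∏_{j=1}^{N−1}∏_{k≥1}(1−q^{k−(2j−1)/(2N−2)}) · ∏_{k≥1}(1−q^{k−1/2}))`. -/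
theorem stmt9 (N : ℕ) (hN : 2 ≤ N) (q : ℝ) (hq0 : 0 < q) (hq1 : q < 1) :
    (∑' k : {k : Fin N → ℤ // Even (∑ i, k i)},
        q ^ ((1 / 2 : ℝ) * ∑ i : Fin N,
          ((k.1 i : ℝ) + ((N : ℝ) - 1 - (i.val : ℝ)) / (2 * (N : ℝ) - 2)) ^ 2)) /
      ∏' k : ℕ, (1 - q ^ (k + 1)) ^ N =
      q ^ ((∑ i : Fin N, ((N : ℝ) - 1 - (i.val : ℝ)) ^ 2) / (2 * (2 * (N : ℝ) - 2) ^ 2)) /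
        ((∏ j ∈ Finset.range (N - 1),
            ∏' k : ℕ, (1 - q ^ (((k : ℝ) + 1) - (2 * ((j : ℝ) + 1) - 1) / (2 * (N : ℝ) - 2)))) *
          ∏' k : ℕ, (1 - q ^ ((k : ℝ) + 1 / 2))) := by
  simpa only [rpowAddChar_apply, Real.rpow_one] using stmt9_general N hN (rpowAddChar hq0)
    (by rwa [rpowAddChar_apply, Real.rpow_one, Real.norm_of_nonneg hq0.le])
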